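/- Let p(x) = Σ_{i=0}^{h−1} b_i x^{α(i)} + Σ_{j=0}^{t−h−1} b_{h+j} x^{β(j)} be a polynomial in n real variables with α(0) = 0, α(i) ∈ (2ℕ)^n and b_i > 0 for 0 ≤ i ≤ h−1. Suppose there are ℓ ≥ 1 and, for each k = 1,…,ℓ and each j, numbers b^k_{h+j} ∈ ℝ with Σ_{k=1}^{ℓ} b^k_{h+j} = b_{h+j}, and nonnegative barycentric weights λ^k_{i,j} ≥ 0 with Σ_{i=0}^{h−1} λ^k_{i,j} = 1 and β(j) = Σ_{i=0}^{h−1} λ^k_{i,j} α(i), such that for each (k,j) with b^k_{h+j} ≠ 0 the set {α(i) : λ^k_{i,j} > 0} is affinely independent and λ^k_{i,j} > 0 on it. If X^k_{i,j} ≥ 0 (with X^k_{i,j} > 0 whenever λ^k_{i,j} > 0) satisfy Σ_{k=1}^{ℓ} Σ_{j} X^k_{i,j} ≤ b_i for all 1 ≤ i ≤ h−1 and Π_{i : λ^k_{i,j} > 0} (X^k_{i,j}/λ^k_{i,j})^{λ^k_{i,j}} ≥ |b^k_{h+j}| for all k, j, then p(x) ≥ b_0 − Σ_{k=1}^{ℓ}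 Σ_{j} X^k_{0,j} for all x ∈ ℝ^n. -/

import Mathlib

/-!
By the weighted AM–GM inequality, a circuit polynomial whose inner coefficient is at most its
circuit number in absolute value is nonnegative. A feasible point of GP-SONC writes `p` as a sum of
such circuit polynomials and of the slack `∑ i, (b i - ∑ k, ∑ j, X k i j) * x ^ α i`. Apart from its
constant term `b 0 - ∑ k, ∑ j, X k 0 j`, which is the claimed bound, the slack consists of
nonnegative multiples of even monomials.
-/

/-- The circuit number `Θ = ∏ i ∈ s, (a i / w i) ^ w i` of a polynomial whose outer terms, indexed
by `s`, have coefficients `a` and whose inner exponent has barycentric coordinates `w` with respect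
to the outer exponents. The index set should be the support of `w`; an index with `w i = 0`
contributes the factor `1`. -/
noncomputable def circuitNumber {ι : Type*} (s : Finset ι) (a w : ι → ℝ) : ℝ :=
  ∏ i ∈ s, (a i / w i) ^ w i

section Circuit

variable {ι σ : Type*} {s : Finset ι} {a w : ι → ℝ}

theorem circuitNumber_mul_prod_rpow_le_sum_mul {y : ι → ℝ} (hw : ∀ i ∈ s, 0 < w i)
    (hw_sum : ∑ i ∈ s, w i = 1) (ha : ∀ i ∈ s, 0 ≤ a i) (hy : ∀ i ∈ s, 0 ≤ y i) :
    circuitNumber s a w * ∏ i ∈ s, y i ^ w i ≤ ∑ i ∈ s, a i * y i := by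
  have hdiv : ∀ i ∈ s, 0 ≤ a i / w i := fun i hi => div_nonneg (ha i hi) (hw i hi).le
  calc circuitNumber s a w * ∏ i ∈ s, y i ^ w i
      = ∏ i ∈ s, (a i / w i * y i) ^ w i := by
        rw [circuitNumber, ← Finset.prod_mul_distrib]
        exact Finset.prod_congr rfl fun i hi => (Real.mul_rpow (hdiv i hi) (hy i hi)).symm
    _ ≤ ∑ i ∈ s, w i * (a i / w i * y i) :=
        Real.geom_mean_le_arith_mean_weighted s w _ (fun i hi => (hw i hi).le) hw_sum
          fun i hi => mul_nonneg (hdiv i hi) (hy i hi)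
    _ = ∑ i ∈ s, a i * y i :=
        Finset.sum_congr rfl fun i hi => by rw [← mul_assoc, mul_div_cancel₀ _ (hw i hi).ne']

variable [Fintype σ] {α : ι → σ → ℕ} {β : σ → ℕ}

theorem prod_pow_eq_prod_prod_pow_rpow {x : σ → ℝ} (hx : ∀ m, 0 ≤ x m) (hw : ∀ i ∈ s, 0 ≤ w i)
    (hβ : ∀ m, (β m : ℝ) = ∑ i ∈ s, w i * α i m) :
    ∏ m, x m ^ β m = ∏ i ∈ s, (∏ m, x m ^ α i m) ^ w i := by
  have hfactor (m : σ) : x m ^ β m = ∏ i ∈ s, (x m ^ α i m) ^ w i := by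
    rw [← Real.rpow_natCast, hβ m,
      Real.rpow_sum_of_nonneg (hx m) fun i hi => mul_nonneg (hw i hi) (Nat.cast_nonneg _)]
    refine Finset.prod_congr rfl fun i _ => ?_
    rw [mul_comm, Real.rpow_mul (hx m), Real.rpow_natCast]
  simp_rw [hfactor]
  rw [Finset.prod_comm]
  exact Finset.prod_congr rfl fun i _ =>
    Real.finsetProd_rpow _ _ (fun m _ => pow_nonneg (hx m) _) _

theorem prod_pow_nonneg_of_even {R : Type*} [CommRing R] [LinearOrder R] [IsStrictOrderedRing R]
    {e : σ → ℕ} (he : ∀ m, Even (e m)) (x : σ → R) :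
    0 ≤ ∏ m, x m ^ e m :=
  Finset.prod_nonneg fun m _ => (he m).pow_nonneg (x m)

theorem circuit_nonneg_of_abs_le_circuitNumber (hα : ∀ i ∈ s, ∀ m, Even (α i m))
    (hw : ∀ i ∈ s, 0 < w i) (hw_sum : ∑ i ∈ s, w i = 1)
    (hβ : ∀ m, (β m : ℝ) = ∑ i ∈ s, w i * α i m) (ha : ∀ i ∈ s, 0 ≤ a i) {d : ℝ}
    (hd : |d| ≤ circuitNumber s a w) (x : σ → ℝ) :
    0 ≤ (∑ i ∈ s, a i * ∏ m, x m ^ α i m) + d * ∏ m, x m ^ β m := by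
  have habs : |∏ m, x m ^ β m| = ∏ i ∈ s, (∏ m, x m ^ α i m) ^ w i := by
    simp_rw [Finset.abs_prod, abs_pow]
    rw [prod_pow_eq_prod_prod_pow_rpow (fun m => abs_nonneg (x m)) (fun i hi => (hw i hi).le) hβ]
    refine Finset.prod_congr rfl fun i hi => ?_
    simp_rw [(hα i hi _).pow_abs]
  have hinner : |d * ∏ m, x m ^ β m| ≤ ∑ i ∈ s, a i * ∏ m, x m ^ α i m :=
    calc |d * ∏ m, x m ^ β m|
        ≤ circuitNumber s a w * |∏ m, x m ^ β m| := by
          rw [abs_mul]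
          exact mul_le_mul_of_nonneg_right hd (abs_nonneg _)
      _ ≤ ∑ i ∈ s, a i * ∏ m, x m ^ α i m := by
          rw [habs]
          exact circuitNumber_mul_prod_rpow_le_sum_mul hw hw_sum ha fun i hi =>
            prod_pow_nonneg_of_even (hα i hi) x
  exact neg_le_iff_add_nonneg'.1 (neg_le_of_abs_le hinner)

theorem sum_mul_add_nonneg_of_abs_le_circuitNumber [Fintype ι] (hα : ∀ i m, Even (α i m))
    (ha : ∀ i, 0 ≤ a i) {d : ℝ} (hw : d ≠ 0 → ∀ i, 0 ≤ w i) (hw_sum : d ≠ 0 → ∑ i, w i = 1)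
    (hβ : d ≠ 0 → ∀ m, (β m : ℝ) = ∑ i, w i * α i m)
    (hd : d ≠ 0 → |d| ≤ circuitNumber {i | 0 < w i} a w) (x : σ → ℝ) :
    0 ≤ (∑ i, a i * ∏ m, x m ^ α i m) + d * ∏ m, x m ^ β m := by
  have hterm (i : ι) : 0 ≤ a i * ∏ m, x m ^ α i m :=
    mul_nonneg (ha i) (prod_pow_nonneg_of_even (hα i) x)
  rcases eq_or_ne d 0 with rfl | hd0
  · simpa only [zero_mul, add_zero] using Finset.sum_nonneg fun i _ => hterm i
  have hpos {i : ι} (hi : w i ≠ 0) : 0 < w i := (hw hd0 i).lt_of_ne' hi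
  have hsupp : 0 ≤ (∑ i with 0 < w i, a i * ∏ m, x m ^ α i m) + d * ∏ m, x m ^ β m := by
    refine circuit_nonneg_of_abs_le_circuitNumber (fun i _ => hα i)
      (fun i hi => (Finset.mem_filter.1 hi).2) ?_ (fun m => ?_) (fun i _ => ha i) (hd hd0) x
    · rw [Finset.sum_filter_of_ne fun i _ => hpos, hw_sum hd0]
    · rw [hβ hd0 m, Finset.sum_filter_of_ne fun i _ hi => hpos (left_ne_zero_of_mul hi)]
  refine hsupp.trans (add_le_add_left ?_ _)
  exact Finset.sum_le_univ_sum_of_nonneg hterm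

end Circuit

section Slack

variable {ι τ R : Type*} [Fintype ι] [Fintype τ] [PartialOrder R]

theorem le_sum_mul_of_nonneg_of_ne [Semiring R] [IsOrderedRing R] {f y : ι → R} {i₀ : ι}
    (hy : ∀ i, 0 ≤ y i) (hy₀ : y i₀ = 1) (hf : ∀ i, i ≠ i₀ → 0 ≤ f i) : f i₀ ≤ ∑ i, f i * y i :=
  calc f i₀ = ∑ i ∈ {i₀}, f i * y i := by rw [Finset.sum_singleton, hy₀, mul_one]
    _ ≤ ∑ i, f i * y i :=
      Finset.sum_le_sum_of_subset_of_nonneg (Finset.subset_univ _) fun i _ hi =>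
        mul_nonneg (hf i (Finset.notMem_singleton.1 hi)) (hy i)

theorem sub_sum_le_sum_mul_add_sum [Ring R] [IsOrderedRing R] {b y : ι → R} {X : τ → ι → R}
    {z : τ → R} {i₀ : ι} (hy : ∀ i, 0 ≤ y i) (hy₀ : y i₀ = 1)
    (hX : ∀ i, i ≠ i₀ → ∑ r, X r i ≤ b i) (hz : ∀ r, 0 ≤ (∑ i, X r i * y i) + z r) :
    b i₀ - ∑ r, X r i₀ ≤ (∑ i, b i * y i) + ∑ r, z r :=
  calc b i₀ - ∑ r, X r i₀
      ≤ ∑ i, (b i - ∑ r, X r i) * y i :=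
        le_sum_mul_of_nonneg_of_ne (f := fun i => b i - ∑ r, X r i) hy hy₀
          fun i hi => sub_nonneg.2 (hX i hi)
    _ ≤ (∑ i, (b i - ∑ r, X r i) * y i) + ∑ r, ((∑ i, X r i * y i) + z r) :=
        le_add_of_nonneg_right (Finset.sum_nonneg fun r _ => hz r)
    _ = (∑ i, b i * y i) + ∑ r, z r := by
        simp_rw [sub_mul, Finset.sum_sub_distrib, Finset.sum_add_distrib, Finset.sum_mul]
        rw [Finset.sum_comm (s := (Finset.univ : Finset ι))]
        abel

end Slack

theorem GP_SONC_lower_bound_general {ι σ κ J : Type*} [Fintype ι] [Fintype σ] [Fintype κ]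
    [Fintype J] {α : ι → σ → ℕ} {β : J → σ → ℕ} {b : ι → ℝ} {c : J → ℝ} {bs : κ → J → ℝ}
    {lam X : κ → ι → J → ℝ} {i₀ : ι} (hα₀ : ∀ m, α i₀ m = 0) (hα : ∀ i m, Even (α i m))
    (hbs : ∀ j, ∑ k, bs k j = c j)
    (hlam : ∀ k j, bs k j ≠ 0 → ∀ i, 0 ≤ lam k i j)
    (hlam_sum : ∀ k j, bs k j ≠ 0 → ∑ i, lam k i j = 1)
    (hβ : ∀ k j, bs k j ≠ 0 → ∀ m, (β j m : ℝ) = ∑ i, lam k i j * α i m)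
    (hX : ∀ k i j, 0 ≤ X k i j)
    (hX_sum : ∀ i, i ≠ i₀ → ∑ k, ∑ j, X k i j ≤ b i)
    (hcirc : ∀ k j, bs k j ≠ 0 →
      |bs k j| ≤ circuitNumber {i | 0 < lam k i j} (fun i => X k i j) fun i => lam k i j)
    (x : σ → ℝ) :
    b i₀ - ∑ k, ∑ j, X k i₀ j ≤
      (∑ i, b i * ∏ m, x m ^ α i m) + ∑ j, c j * ∏ m, x m ^ β j m := by
  have hmonomial₀ : ∏ m, x m ^ α i₀ m = 1 := by simp only [hα₀, pow_zero, Finset.prod_const_one]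
  have hcircuit (r : κ × J) :
      0 ≤ (∑ i, X r.1 i r.2 * ∏ m, x m ^ α i m) + bs r.1 r.2 * ∏ m, x m ^ β r.2 m :=
    sum_mul_add_nonneg_of_abs_le_circuitNumber hα (fun i => hX r.1 i r.2) (hlam r.1 r.2)
      (hlam_sum r.1 r.2) (hβ r.1 r.2) (hcirc r.1 r.2) x
  have hinner : ∑ j, c j * ∏ m, x m ^ β j m =
      ∑ r : κ × J, bs r.1 r.2 * ∏ m, x m ^ β r.2 m := by
    simp_rw [← hbs, Finset.sum_mul, Fintype.sum_prod_type_right]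
  rw [hinner, ← Fintype.sum_prod_type' fun k j => X k i₀ j]
  refine sub_sum_le_sum_mul_add_sum (X := fun (r : κ × J) i => X r.1 i r.2)
    (fun i => prod_pow_nonneg_of_even (hα i) x) hmonomial₀ (fun i hi => ?_) hcircuit
  rw [Fintype.sum_prod_type]
  exact hX_sum i hi

/-- (Correctness of the SONC lower bound obtained from a
feasible point of the program GP-SONC, for a cover of the Newton polytope by
`ℓ` simplices.) Let
`p = Σ_{i=0}^{h-1} b_i x^{α(i)} + Σ_{j=0}^{t-h-1} b_{h+j} x^{β(j)}` with
`α(0) = 0`, `α(i) ∈ (2ℕ)^n`, `b_i > 0`. Suppose each negative coefficient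
`b_{h+j}` is distributed as `b_{h+j} = Σ_{k=1}^ℓ b^k_{h+j}`, with nonnegative
barycentric weights `λ^k_{i,j}` (summing to `1` over `i`, representing `β(j)`
as a combination of the `α(i)`), such that whenever `b^k_{h+j} ≠ 0` the points
`{α(i) : λ^k_{i,j} > 0}` are affinely independent. If `X^k_{i,j} ≥ 0` (with
`X^k_{i,j} > 0` whenever `λ^k_{i,j} > 0`) satisfy
`Σ_k Σ_j X^k_{i,j} ≤ b_i` for all `1 ≤ i ≤ h-1` and
`Π_{i : λ^k_{i,j}>0} (X^k_{i,j}/λ^k_{i,j})^{λ^k_{i,j}} ≥ |b^k_{h+j}|` for all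
`k, j`, then `p(x) ≥ b_0 - Σ_k Σ_j X^k_{0,j}` for all `x ∈ ℝ^n`. -/
theorem GP_SONC_lower_bound
    (n h t l : ℕ) (hh : 0 < h) (hht : h < t) (hl : 1 ≤ l)
    (α : Fin h → Fin n → ℕ) (β : Fin (t - h) → Fin n → ℕ)
    (b : Fin h → ℝ) (c : Fin (t - h) → ℝ)
    (hα0 : ∀ k, α ⟨0, hh⟩ k = 0)
    (heven : ∀ i k, Even (α i k))
    (hb : ∀ i, 0 < b i)
    (bs : Fin l → Fin (t - h) → ℝ)
    (hbs : ∀ j, ∑ k, bs k j = c j)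
    (lam : Fin l → Fin h → Fin (t - h) → ℝ)
    (hlam : ∀ k i j, 0 ≤ lam k i j)
    (hlamsum : ∀ k j, ∑ i, lam k i j = 1)
    (hbar : ∀ k j m, (β j m : ℝ) = ∑ i, lam k i j * (α i m : ℝ))
    (haff : ∀ k j, bs k j ≠ 0 →
      AffineIndependent ℝ
        (fun i : {i : Fin h // 0 < lam k i j} => fun m => (α i.1 m : ℝ)))
    (X : Fin l → Fin h → Fin (t - h) → ℝ)
    (hXnn : ∀ k i j, 0 ≤ X k i j)
    (hXpos : ∀ k i j, 0 < lam k i j → 0 < X k i j)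
    (hcons : ∀ i : Fin h, 1 ≤ (i : ℕ) → ∑ k, ∑ j, X k i j ≤ b i)
    (hcirc : ∀ k j,
      |bs k j| ≤
        ∏ i ∈ Finset.univ.filter (fun i : Fin h => 0 < lam k i j),
          (X k i j / lam k i j) ^ lam k i j) :
    ∀ x : Fin n → ℝ,
      b ⟨0, hh⟩ - ∑ k, ∑ j, X k ⟨0, hh⟩ j ≤
        (∑ i, b i * ∏ m, x m ^ α i m) + ∑ j, c j * ∏ m, x m ^ β j m :=
  GP_SONC_lower_bound_general hα0 heven hbs (fun k j _ i => hlam k i j) (fun k j _ => hlamsum k j)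
    (fun k j _ => hbar k j) hXnn (fun i hi => hcons i (Nat.pos_of_ne_zero (Fin.val_ne_of_ne hi)))
    fun k j _ => hcirc k j
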